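/- Let θ : A → A^ℓ be a primitive substitution of constant length ℓ over a finite alphabet A which is one-to-one as a map A → A^ℓ, has a coincidence of order k, and whose subshift X_θ is infinite. Set Θ = θ^k, a substitution of constant length |Θ| = ℓ^k. Then 1 ≤ log|Θ| / (log|Θ| − log(|Θ| − C(Θ))) ≤ ac_(σ|_{X_θ}) ≤ ac¯(σ|_{X_θ}) ≤ log|Θ| / (log|Θ| − log(|Θ| − c(Θ))) < ∞. -/

import Mathlib

open Filter Topology Set MeasureTheory
open scoped ENNReal

noncomputable section

/-- The upper density of a set of natural numbers. -/
def upperDensity (E : Set ℕ) : ℝ :=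
  Filter.limsup (fun n : ℕ =>
    (∑ k ∈ Finset.range n, E.indicator (fun _ => (1 : ℝ)) k) / n) Filter.atTop

/-- `S` is an `(f,δ,ν)`-separated subset of `X`, with respect to the distance `ρ`. -/
def IsSepSet {α : Type*} (ρ : α → α → ℝ) (f : α → α) (X : Set α) (δ ν : ℝ) (S : Set α) : Prop :=
  S ⊆ X ∧ ∀ x ∈ S, ∀ y ∈ S, x ≠ y → ν ≤ upperDensity {k : ℕ | δ ≤ ρ (f^[k] x) (f^[k] y)}

/-- The asymptotic separation number `Sep(f,δ,ν)` of `f` on `X`. -/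
def sepNum {α : Type*} (ρ : α → α → ℝ) (f : α → α) (X : Set α) (δ ν : ℝ) : ℕ∞ :=
  ⨆ (S : Set α) (_ : IsSepSet ρ f X δ ν S), S.encard

/-- The quantity `log s / (- log ν)`, with value `∞` if `s = ∞`. -/
def logRatio (s : ℕ∞) (ν : ℝ) : ℝ≥0∞ :=
  if s = ⊤ then ⊤ else ENNReal.ofReal (Real.log (s.toNat : ℝ) / (- Real.log ν))

/-- The lower amorphic complexity of `f` on `X`. -/
def acLower {α : Type*} (ρ : α → α → ℝ) (f : α → α) (X : Set α) : ℝ≥0∞ :=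
  ⨆ (δ : ℝ) (_ : 0 < δ),
    Filter.liminf (fun ν : ℝ => logRatio (sepNum ρ f X δ ν) ν) (𝓝[>] (0 : ℝ))

/-- The upper amorphic complexity of `f` on `X`. -/
def acUpper {α : Type*} (ρ : α → α → ℝ) (f : α → α) (X : Set α) : ℝ≥0∞ :=
  ⨆ (δ : ℝ) (_ : 0 < δ),
    Filter.limsup (fun ν : ℝ => logRatio (sepNum ρ f X δ ν) ν) (𝓝[>] (0 : ℝ))

/-- The left shift on `A^ℤ`. -/
def shift {A : Type*} (x : ℤ → A) : ℤ → A := fun n => x (n + 1)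

open scoped Classical in
/-- The Cantor metric `d(x,y) = 2^{-min{|k| : x_k ≠ y_k}}` on `A^ℤ`. -/
def cantorDist {A : Type*} (x y : ℤ → A) : ℝ :=
  if x = y then 0
  else (2 : ℝ) ^ (-((sInf {n : ℕ | ∃ k : ℤ, k.natAbs = n ∧ x k ≠ y k} : ℕ) : ℤ))

/-- The Besicovitch pseudometric `D_1` on `A^ℤ`. -/
def besD1 {A : Type*} (x y : ℤ → A) : ℝ :=
  upperDensity {k : ℕ | x (k : ℤ) ≠ y (k : ℤ)}

/-- The Besicovitch pseudometric `D_B` associated to a map `f` and a distance `ρ`. -/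
def besDB {α : Type*} (ρ : α → α → ℝ) (f : α → α) (x y : α) : ℝ :=
  Filter.limsup (fun n : ℕ => (∑ k ∈ Finset.range n, ρ (f^[k] x) (f^[k] y)) / n) Filter.atTop

/-- The pseudometric `D_δ` on `A^ℤ` associated to a metric `ρ` on `A^ℤ`. -/
def Ddelta {A : Type*} (ρ : (ℤ → A) → (ℤ → A) → ℝ) (δ : ℝ) (x y : ℤ → A) : ℝ :=
  upperDensity {k : ℕ | δ ≤ ρ (shift^[k] x) (shift^[k] y)}

/-- The closure of the two-sided shift orbit of `x₀`. -/
def orbitClosure {A : Type*} [TopologicalSpace A] (x₀ : ℤ → A) : Set (ℤ → A) :=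
  closure {y | ∃ k : ℤ, y = fun n => x₀ (n + k)}

/-- The extension of a constant length substitution `θ : A → A^ℓ` to `A^ℤ`,
via `θ(x)_{ℓk+i} = θ(x_k)_i`. -/
def substApply {A : Type*} {ℓ : ℕ} (hℓ : 0 < ℓ) (θ : A → Fin ℓ → A)
    (x : ℤ → A) : ℤ → A := fun n =>
  θ (x (n / (ℓ : ℤ))) ⟨(n % (ℓ : ℤ)).toNat, by
    have h1 : 0 ≤ n % (ℓ : ℤ) := Int.emod_nonneg n (by exact_mod_cast hℓ.ne')
    have h2 : n % (ℓ : ℤ) < (ℓ : ℤ) := Int.emod_lt_of_pos n (by exact_mod_cast hℓ)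
    omega⟩

/-- A constant length substitution is primitive if some power `θ^m` of it is such that
every letter `b` occurs in every word `θ^m(a)`. -/
def IsPrimitive {A : Type*} {ℓ : ℕ} (hℓ : 0 < ℓ) (θ : A → Fin ℓ → A) : Prop :=
  ∃ m : ℕ, 1 ≤ m ∧ ∀ a b : A, ∃ j : ℤ, 0 ≤ j ∧ j < (ℓ : ℤ) ^ m ∧
    (substApply hℓ θ)^[m] (fun _ => a) j = b

open scoped Classical in
/-- The number of positions at which the words `θ(a)` and `θ(b)` agree. -/
def coincCount {A : Type*} {ℓ : ℕ} (θ : A → Fin ℓ → A) (a b : A) : ℕ :=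
  (Finset.univ.filter (fun j : Fin ℓ => θ a j = θ b j)).card

/-- `c(θ)`, the minimum of `coincCount θ a b` over pairs `a ≠ b`. -/
def cMin {A : Type*} {ℓ : ℕ} (θ : A → Fin ℓ → A) : ℕ :=
  sInf {n : ℕ | ∃ a b : A, a ≠ b ∧ coincCount θ a b = n}

/-- `C(θ)`, the maximum of `coincCount θ a b` over pairs `a ≠ b`. -/
def cMax {A : Type*} {ℓ : ℕ} (θ : A → Fin ℓ → A) : ℕ :=
  sSup {n : ℕ | ∃ a b : A, a ≠ b ∧ coincCount θ a b = n}

/-- `S` is `ε`-separated with respect to the distance `ρ`. -/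
def IsEpsSeparated {α : Type*} (ρ : α → α → ℝ) (ε : ℝ) (S : Set α) : Prop :=
  ∀ x ∈ S, ∀ y ∈ S, x ≠ y → ε ≤ ρ x y

/-- `M_ε(E)`: the maximal cardinality of an `ε`-separated subset of `E`. -/
def packNum {α : Type*} (ρ : α → α → ℝ) (ε : ℝ) (E : Set α) : ℕ∞ :=
  ⨆ (S : Set α) (_ : S ⊆ E ∧ IsEpsSeparated ρ ε S), S.encard

/-- The lower box dimension of `E` with respect to the distance `ρ`. -/
def lowerBoxDim {α : Type*} (ρ : α → α → ℝ) (E : Set α) : ℝ≥0∞ :=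
  Filter.liminf (fun ε : ℝ => logRatio (packNum ρ ε E) ε) (𝓝[>] (0 : ℝ))

/-- The upper box dimension of `E` with respect to the distance `ρ`. -/
def upperBoxDim {α : Type*} (ρ : α → α → ℝ) (E : Set α) : ℝ≥0∞ :=
  Filter.limsup (fun ε : ℝ => logRatio (packNum ρ ε E) ε) (𝓝[>] (0 : ℝ))

/-- Mean equicontinuity of `f` on `X` with respect to the distance `ρ`. -/
def MeanEquicontinuousOn {α : Type*} (ρ : α → α → ℝ) (f : α → α) (X : Set α) : Prop :=
  ∀ ν : ℝ, 0 < ν → ∃ δ : ℝ, 0 < δ ∧ ∀ x ∈ X, ∀ y ∈ X, ρ x y < δ → besDB ρ f x y < ν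

/-- The subshift `X` has discrete spectrum: for every shift-invariant Borel probability
measure giving `X` full measure (there is exactly one for the systems under consideration),
`L²` has a Hilbert basis of eigenfunctions of the shift. -/
def HasDiscreteSpectrum {A : Type*} [MeasurableSpace A] (X : Set (ℤ → A)) : Prop :=
  ∀ μ : Measure (ℤ → A), IsProbabilityMeasure μ → MeasurePreserving shift μ μ → μ X = 1 →
    ∃ (ι : Type) (b : HilbertBasis ι ℂ (Lp ℂ 2 μ)), ∀ i : ι, ∃ c : ℂ,
      (fun z => (b i : Lp ℂ 2 μ) (shift z)) =ᵐ[μ] (fun z => c * (b i : Lp ℂ 2 μ) z)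

end

/-! ### One-sided substitutions -/

/-- One-sided constant length substitution. -/
def subN {A : Type*} (w : A → ℕ → A) (Q : ℕ) (x : ℕ → A) : ℕ → A :=
  fun n => w (x (n / Q)) (n % Q)

theorem subN_iter {A : Type*} (w : A → ℕ → A) (Q : ℕ) (_hQ : 0 < Q) (M : ℕ) :
    ∀ (x : ℕ → A) (n : ℕ), (subN w Q)^[M] x n =
      (subN w Q)^[M] (fun _ => x (n / Q ^ M)) (n % Q ^ M) := by
  induction M with
  | zero => intro x n; simp
  | succ M ih =>
    intro x n
    rw [Function.iterate_succ_apply', Function.iterate_succ_apply']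
    unfold subN at ih ⊢
    rw [ih x (n / Q), ih _ (n % Q ^ (M + 1) / Q)]
    have e1 : n / Q / Q ^ M = n / Q ^ (M + 1) := by
      rw [Nat.div_div_eq_div_mul, pow_succ']
    have e2 : n % Q ^ (M + 1) / Q = n / Q % Q ^ M := by
      rw [pow_succ', Nat.mod_mul_right_div_self]
    have e3 : n % Q ^ (M + 1) % Q = n % Q := by
      rw [pow_succ', Nat.mod_mul_right_mod]
    rw [e1, e2, e3, Nat.mod_mod]

theorem subN_iter_block {A : Type*} (w : A → ℕ → A) (Q : ℕ) (hQ : 0 < Q) (M : ℕ)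
    (x : ℕ → A) (n i : ℕ) (hi : i < Q ^ M) : (subN w Q)^[M] x (Q ^ M * n + i) =
      (subN w Q)^[M] (fun _ => x n) i := by
  rw [subN_iter w Q hQ M x]
  have e1 : (Q ^ M * n + i) / Q ^ M = n := by
    rw [Nat.mul_add_div (by positivity), Nat.div_eq_of_lt hi, add_zero]
  have e2 : (Q ^ M * n + i) % Q ^ M = i := by
    rw [Nat.mul_add_mod, Nat.mod_eq_of_lt hi]
  rw [e1, e2]

theorem subN_iter_eq {A : Type*} (w : A → ℕ → A) (Q : ℕ) (hQ : 0 < Q) (M : ℕ) :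
    (subN w Q)^[M] = subN (fun a i => (subN w Q)^[M] (fun _ => a) i) (Q ^ M) := by
  funext x n
  rw [subN_iter w Q hQ M x n]; rfl

theorem subN_iter_shift {A : Type*} (w : A → ℕ → A) (Q : ℕ) (hQ : 0 < Q) (M : ℕ)
    (x : ℕ → A) (n t : ℕ) : (subN w Q)^[M] (fun k => x (k + t)) n =
      (subN w Q)^[M] x (n + Q ^ M * t) := by
  rw [subN_iter w Q hQ M, subN_iter w Q hQ M x]
  have e1 : (n + Q ^ M * t) / Q ^ M = n / Q ^ M + t := by
    rw [Nat.add_mul_div_left _ _ (by positivity)]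
  rw [e1, Nat.add_mul_mod_self_left]

theorem subN_injective {A : Type*} (w : A → ℕ → A) (Q : ℕ) (hQ : 0 < Q)
    (hinj : ∀ a b, (∀ i < Q, w a i = w b i) → a = b) : Function.Injective (subN w Q) := by
  intro x y h
  funext n
  apply hinj
  intro i hi
  have := congrFun h (Q * n + i)
  unfold subN at this
  rwa [Nat.mul_add_div hQ, Nat.div_eq_of_lt hi, add_zero, Nat.mul_add_mod,
    Nat.mod_eq_of_lt hi] at this

theorem subN_iter_inj {A : Type*} (w : A → ℕ → A) (Q : ℕ) (hQ : 0 < Q)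
    (hinj : ∀ a b, (∀ i < Q, w a i = w b i) → a = b) (M : ℕ) (a b : A)
    (h : ∀ i < Q ^ M, (subN w Q)^[M] (fun _ => a) i = (subN w Q)^[M] (fun _ => b) i) :
    a = b := by
  have h2 : (subN w Q)^[M] (fun _ => a) = (subN w Q)^[M] (fun _ => b) := by
    funext n
    rw [subN_iter w Q hQ M, subN_iter w Q hQ M (fun _ => b)]
    exact h _ (Nat.mod_lt _ (by positivity))
  exact congrFun ((subN_injective w Q hQ hinj).iterate M h2) 0

theorem eventually_periodic_false {A : Type*} [Nontrivial A] (w : A → ℕ → A) (Q : ℕ)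
    (hQ : 2 ≤ Q) (hinj : ∀ a b, (∀ i < Q, w a i = w b i) → a = b)
    (hprim : ∀ a b, ∃ i < Q, w a i = b) (hcoin : ∃ j < Q, ∀ a b, w a j = w b j)
    (u : ℕ → A) (hu : subN w Q u = u)
    (hper : ∃ P, 0 < P ∧ ∃ K, ∀ k, K ≤ k → u (k + P) = u k) : False := by
  classical
  have hQ0 : 0 < Q := by omega
  have hblock : ∀ n i, i < Q → u (Q * n + i) = w (u n) i := by
    intro n i hi
    conv_lhs => rw [← hu]
    unfold subN
    rw [Nat.mul_add_div hQ0, Nat.div_eq_of_lt hi, add_zero, Nat.mul_add_mod, Nat.mod_eq_of_lt hi]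
  set P := Nat.find hper with hP
  obtain ⟨hPpos, K, hK⟩ := Nat.find_spec hper
  rw [← hP] at hPpos hK
  have hmul : ∀ c k, K ≤ k → u (k + P * c) = u k := by
    intro c
    induction c with
    | zero => intro k _; simp
    | succ c ih =>
      intro k hk
      rw [Nat.mul_succ, ← add_assoc, hK _ (by omega), ih k hk]
  have hg : Nat.gcd P Q = 1 := by
    set g := Nat.gcd P Q with hgdef
    have hgpos : 0 < g := Nat.gcd_pos_of_pos_left _ hPpos
    obtain ⟨P', hP'⟩ : g ∣ P := Nat.gcd_dvd_left P Q
    obtain ⟨Q', hQ'⟩ : g ∣ Q := Nat.gcd_dvd_right P Q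
    have hper' : 0 < P' ∧ ∃ K, ∀ k, K ≤ k → u (k + P') = u k := by
      refine ⟨Nat.pos_of_ne_zero (by rintro rfl; simp at hP'; omega), K, fun n hn => ?_⟩
      apply hinj
      intro i hi
      rw [← hblock _ _ hi, ← hblock _ _ hi]
      have : Q * (n + P') + i = (Q * n + i) + P * Q' := by
        have : Q * P' = P * Q' := by
          calc Q * P' = (g * Q') * P' := by rw [← hQ']
            _ = (g * P') * Q' := by ring
            _ = P * Q' := by rw [← hP']
        rw [mul_add, this]; ring
      rw [this]
      apply hmul
      nlinarith
    have hmin : P ≤ P' := Nat.find_min' hper hper'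
    have : P' ≤ P := Nat.le_of_dvd hPpos ⟨g, by rw [mul_comm]; exact hP'⟩
    have hPP : P' = P := by omega
    rw [hPP] at hP'
    have : 1 * P = g * P := by rw [one_mul]; exact hP'
    exact (Nat.eq_of_mul_eq_mul_right hPpos this).symm
  obtain ⟨j, hj, hjc⟩ := hcoin
  have hconst : ∀ m, K ≤ m → u m = w (u 0) j := by
    intro m hm
    obtain ⟨z, hz1, hz2⟩ := Nat.chineseRemainder (Nat.Coprime.symm hg : Nat.Coprime Q P) j m
    -- `x = z + Q * P * m`
    have hx1 : (z + Q * P * m) % Q = j := by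
      have : z % Q = j % Q := hz1
      rw [mul_assoc, Nat.add_mul_mod_self_left, this, Nat.mod_eq_of_lt hj]
    have hge : m ≤ z + Q * P * m := by nlinarith [Nat.mul_pos hQ0 hPpos]
    have hx2 : P ∣ (z + Q * P * m) - m := by
      rw [← Nat.modEq_iff_dvd' hge]
      have : z + Q * P * m ≡ z [MOD P] := by
        rw [Nat.ModEq, show Q * P * m = P * (Q * m) by ring, Nat.add_mul_mod_self_left]
      exact (this.trans hz2).symm
    obtain ⟨c, hc⟩ := hx2
    have e : z + Q * P * m = m + P * c := by omega
    rw [← hmul c m hm, ← e]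
    conv_lhs => rw [← hu]
    unfold subN
    rw [hx1]
    exact hjc _ _
  obtain ⟨c, hc⟩ := exists_ne (w (u 0) j)
  obtain ⟨i, hi, hic⟩ := hprim (u K) c
  apply hc
  rw [← hic, ← hblock _ _ hi]
  apply hconst
  nlinarith

theorem uniform_rec {A : Type*} [Finite A] (w : A → ℕ → A) (Q : ℕ)
    (hQ : 2 ≤ Q) (hprim : ∀ a b, ∃ i < Q, w a i = b)
    (u : ℕ → A) (hu : subN w Q u = u) :
    ∃ R, ∀ i0 b, ∃ e ≤ R, u (b + e) = u i0 ∧ u (b + e + 1) = u (i0 + 1) := by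
  classical
  have hQ0 : 0 < Q := by omega
  have hblock : ∀ n i, i < Q → u (Q * n + i) = w (u n) i := by
    intro n i hi
    conv_lhs => rw [← hu]
    unfold subN
    rw [Nat.mul_add_div hQ0, Nat.div_eq_of_lt hi, add_zero, Nat.mul_add_mod, Nat.mod_eq_of_lt hi]
  have hit : ∀ M, (subN w Q)^[M] u = u := fun M => Function.iterate_fixed hu M
  have hsame : ∀ M n n' i, i < Q ^ M → u n = u n' → u (Q ^ M * n + i) = u (Q ^ M * n' + i) := by
    intro M n n' i hi h
    have h1 := subN_iter_block w Q hQ0 M u n i hi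
    have h2 := subN_iter_block w Q hQ0 M u n' i hi
    rw [hit] at h1 h2
    rw [h1, h2, h]
  have one : ∀ i0, ∃ R, ∀ b, ∃ e ≤ R, u (b + e) = u i0 ∧ u (b + e + 1) = u (i0 + 1) := by
    intro i0
    obtain ⟨K, hK⟩ : ∃ K, i0 + 1 < Q ^ K := ⟨i0 + 1, Nat.lt_pow_self (by omega)⟩
    refine ⟨2 * Q ^ (K + 1), fun b => ?_⟩
    set q := b / Q ^ (K + 1) + 1 with hq
    obtain ⟨i, hi, hiu⟩ := hprim (u q) (u 0)
    rw [← hblock _ _ hi] at hiu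
    have h1 := hsame K (Q * q + i) 0 i0 (by omega) hiu
    have h2 := hsame K (Q * q + i) 0 (i0 + 1) (by omega) hiu
    have hb := Nat.div_add_mod b (Q ^ (K + 1))
    have hb2 := Nat.mod_lt b (show 0 < Q ^ (K + 1) by positivity)
    have hpos : Q ^ K * (Q * q + i) + i0 = Q ^ (K + 1) * (b / Q ^ (K + 1)) + Q ^ (K + 1)
        + (Q ^ K * i + i0) := by
      rw [hq, pow_succ]; ring
    have hlt : Q ^ K * i + i0 < Q ^ (K + 1) := by
      rw [pow_succ]
      calc Q ^ K * i + i0 < Q ^ K * i + Q ^ K := by omega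
        _ = Q ^ K * (i + 1) := by ring
        _ ≤ Q ^ K * Q := Nat.mul_le_mul_left _ hi
    have aux : ∀ X Y Z c r : ℕ, X = Y + Z + c → Y + r = b → r < Z → c < Z →
        X - b ≤ 2 * Z ∧ b + (X - b) = X := by intros; omega
    obtain ⟨e1, e⟩ := aux _ _ _ _ _ hpos hb hb2 hlt
    refine ⟨Q ^ K * (Q * q + i) + i0 - b, e1, ?_⟩
    rw [e, h1, add_assoc, h2]
    simp
  choose R hR using one
  have hfin : (Set.range (fun i => (u i, u (i + 1)))).Finite := Set.toFinite _
  -- choose a representative of each pair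
  have : ∀ p : A × A, ∃ R, ∀ i0, (u i0, u (i0 + 1)) = p →
      ∀ b, ∃ e ≤ R, u (b + e) = u i0 ∧ u (b + e + 1) = u (i0 + 1) := by
    intro p
    by_cases hp : ∃ i, (u i, u (i + 1)) = p
    · obtain ⟨i, hi⟩ := hp
      refine ⟨R i, fun i0 h0 b => ?_⟩
      obtain ⟨e, he, h1, h2⟩ := hR i b
      rw [← hi, Prod.mk.injEq] at h0
      exact ⟨e, he, by rw [h1, h0.1], by rw [h2, h0.2]⟩
    · exact ⟨0, fun i0 h0 => absurd ⟨i0, h0⟩ hp⟩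
  choose R' hR' using this
  obtain ⟨B, hB⟩ := (Set.finite_range R').bddAbove
  refine ⟨B, fun i0 b => ?_⟩
  obtain ⟨e, he, h⟩ := hR' _ i0 rfl b
  exact ⟨e, he.trans (hB ⟨_, rfl⟩), h⟩

theorem recog_step {A : Type*} [Finite A] (w : A → ℕ → A) (Q : ℕ)
    (hQ : 2 ≤ Q) (hinj : ∀ a b, (∀ i < Q, w a i = w b i) → a = b)
    (hprim : ∀ a b, ∃ i < Q, w a i = b)
    (u : ℕ → A) (hu : subN w Q u = u)
    (hbad : ∀ N, ∃ i j, (∀ s < N, u (i + s) = u (j + s)) ∧ ¬ i ≡ j [MOD Q])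
    (M : ℕ) (hM : 1 ≤ M) :
    ∃ (t : ℕ) (y : ℕ → A) (f : A → A → A), ¬ Q ∣ t ∧
      (∀ n, (subN w Q)^[M] y n = u (n + t)) ∧ ∀ n, y n = f (u n) (u (n + 1)) := by
  classical
  have hQ0 : 0 < Q := by omega
  have hit : ∀ M, (subN w Q)^[M] u = u := fun M => Function.iterate_fixed hu M
  have hsame : ∀ n n' i, i < Q ^ M → u n = u n' → u (Q ^ M * n + i) = u (Q ^ M * n' + i) := by
    intro n n' i hi h
    have h1 := subN_iter_block w Q hQ0 M u n i hi
    have h2 := subN_iter_block w Q hQ0 M u n' i hi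
    rw [hit] at h1 h2
    rw [h1, h2, h]
  have hsame2 : ∀ n n' i, i < 2 * Q ^ M → u n = u n' → u (n + 1) = u (n' + 1) →
      u (Q ^ M * n + i) = u (Q ^ M * n' + i) := by
    intro n n' i hi h h'
    by_cases hlt : i < Q ^ M
    · exact hsame n n' i hlt h
    · have := hsame (n + 1) (n' + 1) (i - Q ^ M) (by omega) h'
      rw [mul_add, mul_add, mul_one] at this
      rwa [show Q ^ M * n + Q ^ M + (i - Q ^ M) = Q ^ M * n + i by omega,
        show Q ^ M * n' + Q ^ M + (i - Q ^ M) = Q ^ M * n' + i by omega] at this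
  obtain ⟨R, hR⟩ := uniform_rec w Q hQ hprim u hu
  set q := Q ^ M with hq
  have hqpos : 0 < q := by positivity
  obtain ⟨i, j, hagree, hij⟩ := hbad (q * (R + 4))
  set b := j / q + 1 with hb
  obtain ⟨o, ho⟩ : ∃ o, o = q - j % q := ⟨_, rfl⟩
  have hjm := Nat.mod_lt j hqpos
  have hjd := Nat.div_add_mod j q
  have hjo : j + o = q * b := by
    rw [hb, mul_add, mul_one]; omega
  obtain ⟨t, ht⟩ : ∃ t, t = q - (i + o) % q := ⟨_, rfl⟩
  have him := Nat.mod_lt (i + o) hqpos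
  have hid := Nat.div_add_mod (i + o) q
  set c := (i + o) / q + 1 with hc
  have hio : i + o + t = q * c := by
    rw [hc, mul_add, mul_one]; omega
  have hQq : Q ∣ q := by rw [hq]; exact dvd_pow_self Q (by omega)
  have htQ : ¬ Q ∣ t := by
    intro hdt
    apply hij
    have h1 : Q ∣ i + o := by
      have : Q ∣ i + o + t := by rw [hio]; exact hQq.mul_right _
      exact (Nat.dvd_add_left hdt).mp this
    have h2 : Q ∣ j + o := by rw [hjo]; exact hQq.mul_right _
    have h3 : i + o ≡ j + o [MOD Q] :=
      ((Nat.modEq_zero_iff_dvd).2 h1).trans ((Nat.modEq_zero_iff_dvd).2 h2).symm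
    exact Nat.ModEq.add_right_cancel' o h3
  -- desubstitution of the shifted sequence
  have hy : ∀ n, ∃ a, ∀ s < q, (subN w Q)^[M] (fun _ => a) s = u (q * n + t + s) := by
    intro n
    obtain ⟨e, he, h1, h2⟩ := hR n b
    refine ⟨u (c + e), fun s hs => ?_⟩
    have h3 := subN_iter_block w Q hQ0 M u (c + e) s hs
    rw [hit, ← hq] at h3
    rw [← h3, add_assoc (q * n), ← hsame2 (b + e) n (t + s) (by omega) h1 h2]
    have hqe : q * e ≤ q * R := Nat.mul_le_mul_left _ he
    have h4 := hagree (o + q * e + t + s) (by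
      rw [mul_add]; omega)
    have e1 : i + (o + q * e + t + s) = q * (c + e) + s := by
      rw [mul_add, ← hio]; ring
    have e2 : j + (o + q * e + t + s) = q * (b + e) + (t + s) := by
      rw [mul_add, ← hjo]; ring
    rw [← e1, ← e2, h4]
  choose y hy using hy
  have htq : t ≤ q := by omega
  have hdep : ∀ n n', u n = u n' → u (n + 1) = u (n' + 1) → y n = y n' := by
    intro n n' h h'
    apply subN_iter_inj w Q hQ0 hinj M
    intro s hs
    rw [hy n s hs, hy n' s hs, add_assoc, add_assoc]
    exact hsame2 _ _ _ (by omega) h h'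
  refine ⟨t, y, fun a a' => if h : ∃ n, u n = a ∧ u (n + 1) = a' then y h.choose else a, htQ,
    fun n => ?_, fun n => ?_⟩
  · have h := Nat.div_add_mod n q
    have h' := subN_iter_block w Q hQ0 M y (n / q) (n % q) (Nat.mod_lt _ hqpos)
    rw [← hq, h] at h'
    rw [h', hy _ _ (Nat.mod_lt _ hqpos)]
    congr 1; omega
  · have h : ∃ m, u m = u n ∧ u (m + 1) = u (n + 1) := ⟨n, rfl, rfl⟩
    beta_reduce
    rw [dif_pos h]
    exact (hdep _ _ h.choose_spec.1 h.choose_spec.2).symm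

theorem recog {A : Type*} [Finite A] [Nontrivial A] (w : A → ℕ → A) (Q : ℕ)
    (hQ : 2 ≤ Q) (hinj : ∀ a b, (∀ i < Q, w a i = w b i) → a = b)
    (hprim : ∀ a b, ∃ i < Q, w a i = b) (hcoin : ∃ j < Q, ∀ a b, w a j = w b j)
    (u : ℕ → A) (hu : subN w Q u = u) :
    ∃ N, ∀ i j, (∀ s < N, u (i + s) = u (j + s)) → i ≡ j [MOD Q] := by
  classical
  by_contra hcon
  push Not at hcon
  have hQ0 : 0 < Q := by omega
  have hit : ∀ M, (subN w Q)^[M] u = u := fun M => Function.iterate_fixed hu M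
  have hstep := fun M : ℕ => recog_step w Q hQ hinj hprim u hu hcon (M + 1) (by omega)
  choose t y f ht hy hf using hstep
  obtain ⟨n0, m0, hne, hff⟩ := Finite.exists_ne_map_eq_of_infinite f
  obtain ⟨n, m, hnm, hff⟩ : ∃ n m, n < m ∧ f n = f m := by
    rcases lt_or_gt_of_ne hne with h | h
    · exact ⟨n0, m0, h, hff⟩
    · exact ⟨m0, n0, h, hff.symm⟩
  have hyy : y n = y m := by
    funext k
    rw [hf, hf, hff]
  have key : ∀ k, u (k + t m) = u (k + Q ^ (m - n) * t n) := by
    intro k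
    rw [← hy m k, ← hyy, show m + 1 = (m - n) + (n + 1) by omega, Function.iterate_add_apply]
    have : (subN w Q)^[n + 1] (y n) = fun k => u (k + t n) := by
      funext k; exact hy n k
    rw [this, subN_iter_shift w Q hQ0, hit]
  have hneq : t m ≠ Q ^ (m - n) * t n := by
    intro h
    apply ht m
    rw [h]
    exact (dvd_pow_self Q (by omega)).mul_right _
  apply eventually_periodic_false w Q hQ hinj hprim hcoin u hu
  rcases lt_or_gt_of_ne hneq with h | h
  · refine ⟨Q ^ (m - n) * t n - t m, by omega, t m, fun k hk => ?_⟩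
    have := key (k - t m)
    rw [show k - t m + t m = k by omega,
      show k - t m + Q ^ (m - n) * t n = k + (Q ^ (m - n) * t n - t m) by omega] at this
    exact this.symm
  · refine ⟨t m - Q ^ (m - n) * t n, by omega, Q ^ (m - n) * t n, fun k hk => ?_⟩
    have := key (k - Q ^ (m - n) * t n)
    rw [show k - Q ^ (m - n) * t n + Q ^ (m - n) * t n = k by omega,
      show k - Q ^ (m - n) * t n + t m = k + (t m - Q ^ (m - n) * t n) by omega] at this
    exact this

/-! ### Counting disagreements -/

open scoped Classical in
/-- Number of disagreements of `x` and `y` on `[0,n)`. -/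
noncomputable def cntN {A : Type*} (x y : ℕ → A) (n : ℕ) : ℕ :=
  ∑ k ∈ Finset.range n, if x k = y k then 0 else 1

theorem cntN_mono {A : Type*} (x y : ℕ → A) {m n : ℕ} (h : m ≤ n) : cntN x y m ≤ cntN x y n :=
  Finset.sum_le_sum_of_subset (Finset.range_mono h)

theorem cntN_le {A : Type*} (x y : ℕ → A) (n : ℕ) : cntN x y n ≤ n := by
  unfold cntN
  calc _ ≤ ∑ k ∈ Finset.range n, 1 := Finset.sum_le_sum (fun k _ => by split_ifs <;> omega)
    _ = n := by simp

theorem cntN_add {A : Type*} (x y : ℕ → A) (m n : ℕ) :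
    cntN x y (m + n) = cntN x y m + cntN (fun k => x (k + m)) (fun k => y (k + m)) n := by
  unfold cntN
  rw [Finset.sum_range_add]
  congr 1
  exact Finset.sum_congr rfl fun k _ => by rw [add_comm m k]

theorem cntN_pos {A : Type*} (x y : ℕ → A) (n k : ℕ) (hk : k < n) (h : x k ≠ y k) :
    1 ≤ cntN x y n := by
  classical
  unfold cntN
  calc 1 = (if x k = y k then 0 else 1) := by rw [if_neg h]
    _ ≤ _ := Finset.single_le_sum (f := fun k => if x k = y k then 0 else 1)
      (fun _ _ => Nat.zero_le _) (Finset.mem_range.2 hk)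

theorem cntN_self {A : Type*} (x : ℕ → A) (n : ℕ) : cntN x x n = 0 := by
  unfold cntN; simp

theorem cntN_congr {A : Type*} {x y x' y' : ℕ → A} {n : ℕ} (h : ∀ k < n, x k = x' k)
    (h' : ∀ k < n, y k = y' k) : cntN x y n = cntN x' y' n := by
  unfold cntN
  refine Finset.sum_congr rfl fun k hk => ?_
  rw [h k (Finset.mem_range.1 hk), h' k (Finset.mem_range.1 hk)]

theorem cntN_sub_succ {A : Type*} (w : A → ℕ → A) (L : ℕ) (hL : 0 < L) (x y : ℕ → A) (n : ℕ) :
    cntN (subN w L x) (subN w L y) (L * (n + 1)) =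
      cntN (subN w L x) (subN w L y) (L * n) + cntN (w (x n)) (w (y n)) L := by
  rw [mul_add, mul_one, cntN_add]
  congr 1
  apply cntN_congr <;>
  · intro k hk
    unfold subN
    rw [add_comm, Nat.mul_add_div hL, Nat.div_eq_of_lt hk, add_zero, Nat.mul_add_mod,
      Nat.mod_eq_of_lt hk]

theorem cntN_succ {A : Type*} (x y : ℕ → A) (n : ℕ) :
    cntN x y (n + 1) = cntN x y n + cntN (fun _ : ℕ => x n) (fun _ => y n) 1 := by
  rw [cntN_add]
  congr 1
  apply cntN_congr <;>
  · intro k hk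
    rw [Nat.lt_one_iff.1 hk, zero_add]

theorem cntN_sub_ge {A : Type*} (w : A → ℕ → A) (L : ℕ) (hL : 0 < L) (D : ℕ)
    (hD : ∀ a b, a ≠ b → D ≤ cntN (w a) (w b) L) (x y : ℕ → A) (n : ℕ) :
    D * cntN x y n ≤ cntN (subN w L x) (subN w L y) (L * n) := by
  classical
  induction n with
  | zero => simp [cntN]
  | succ n ih =>
    rw [cntN_sub_succ w L hL, cntN_succ, mul_add]
    refine add_le_add ih ?_
    by_cases h : x n = y n
    · rw [h, cntN_self]; simp
    · refine le_trans ?_ (hD _ _ h)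
      simp [cntN, h]

theorem cntN_sub_le {A : Type*} (w : A → ℕ → A) (L : ℕ) (hL : 0 < L) (D : ℕ)
    (hD : ∀ a b, a ≠ b → cntN (w a) (w b) L ≤ D) (x y : ℕ → A) (n : ℕ) :
    cntN (subN w L x) (subN w L y) (L * n) ≤ D * cntN x y n := by
  classical
  induction n with
  | zero => simp [cntN]
  | succ n ih =>
    rw [cntN_sub_succ w L hL, cntN_succ, mul_add]
    refine add_le_add ih ?_
    by_cases h : x n = y n
    · rw [h, cntN_self]; simp
    · refine le_trans (hD _ _ h) ?_
      simp [cntN, h]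

/-- linear lower bound -/
def LBd (a : ℝ) (F : ℕ → ℕ) : Prop := ∃ b : ℝ, ∀ n, a * n - b ≤ F n

/-- linear upper bound -/
def UBd (a : ℝ) (F : ℕ → ℕ) : Prop := ∃ b : ℝ, ∀ n, (F n : ℝ) ≤ a * n + b

theorem LBd_sub {A : Type*} (w : A → ℕ → A) (L : ℕ) (hL : 0 < L) (D : ℕ)
    (hD : ∀ a b, a ≠ b → D ≤ cntN (w a) (w b) L) (x y : ℕ → A) (a : ℝ) (ha : 0 ≤ a)
    (h : LBd a (cntN x y)) : LBd ((D / L : ℝ) * a) (cntN (subN w L x) (subN w L y)) := by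
  obtain ⟨b, hb⟩ := h
  refine ⟨D * (a + b), fun n => ?_⟩
  have h1 := cntN_sub_ge w L hL D hD x y (n / L)
  have h2 : cntN (subN w L x) (subN w L y) (L * (n / L)) ≤ cntN (subN w L x) (subN w L y) n :=
    cntN_mono _ _ (Nat.mul_div_le n L)
  have h3 : (D : ℝ) * cntN x y (n / L) ≤ cntN (subN w L x) (subN w L y) n := by
    exact_mod_cast h1.trans h2
  have h4 := hb (n / L)
  have h5 : (n : ℝ) / L ≤ ((n / L : ℕ) : ℝ) + 1 := by
    rw [div_le_iff₀ (by positivity)]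
    have := (Nat.lt_mul_div_succ n hL).le
    have h : (n : ℝ) ≤ (L * (n / L + 1) : ℕ) := by exact_mod_cast this
    push_cast at h ⊢
    linarith
  have h6 : a * ((n : ℝ) / L) ≤ a * (((n / L : ℕ) : ℝ) + 1) := mul_le_mul_of_nonneg_left h5 ha
  have h7 : (D : ℝ) * (a * ((n : ℝ) / L) - (a + b)) ≤ D * cntN x y (n / L) :=
    mul_le_mul_of_nonneg_left (by linarith) (by positivity)
  calc (D / L : ℝ) * a * n - D * (a + b) = (D : ℝ) * (a * ((n : ℝ) / L) - (a + b)) := by ring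
    _ ≤ _ := h7.trans h3

theorem UBd_sub {A : Type*} (w : A → ℕ → A) (L : ℕ) (hL : 0 < L) (D : ℕ)
    (hD : ∀ a b, a ≠ b → cntN (w a) (w b) L ≤ D) (x y : ℕ → A) (a : ℝ) (ha : 0 ≤ a)
    (h : UBd a (cntN x y)) : UBd ((D / L : ℝ) * a) (cntN (subN w L x) (subN w L y)) := by
  obtain ⟨b, hb⟩ := h
  refine ⟨D * (a + b), fun n => ?_⟩
  have h1 := cntN_sub_le w L hL D hD x y (n / L + 1)
  have h2 : cntN (subN w L x) (subN w L y) n ≤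
      cntN (subN w L x) (subN w L y) (L * (n / L + 1)) :=
    cntN_mono _ _ (Nat.lt_mul_div_succ n hL).le
  have h3 : (cntN (subN w L x) (subN w L y) n : ℝ) ≤ (D : ℝ) * cntN x y (n / L + 1) := by
    exact_mod_cast h2.trans h1
  have h4 := hb (n / L + 1)
  have h5 : ((n / L : ℕ) : ℝ) ≤ (n : ℝ) / L := Nat.cast_div_le
  have h6 : a * ((n / L : ℕ) : ℝ) ≤ a * ((n : ℝ) / L) := mul_le_mul_of_nonneg_left h5 ha
  push_cast at h4
  have h7 : (D : ℝ) * cntN x y (n / L + 1) ≤ (D : ℝ) * (a * ((n : ℝ) / L) + (a + b)) :=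
    mul_le_mul_of_nonneg_left (by linarith) (by positivity)
  calc _ ≤ _ := h3.trans h7
    _ = _ := by ring

theorem LBd_iter {A : Type*} (w : A → ℕ → A) (L : ℕ) (hL : 0 < L) (D : ℕ)
    (hD : ∀ a b, a ≠ b → D ≤ cntN (w a) (w b) L) (x y : ℕ → A) (a : ℝ) (ha : 0 ≤ a)
    (h : LBd a (cntN x y)) (n : ℕ) :
    LBd ((D / L : ℝ) ^ n * a) (cntN ((subN w L)^[n] x) ((subN w L)^[n] y)) := by
  induction n with
  | zero => simpa using h
  | succ n ih =>
    rw [Function.iterate_succ_apply', Function.iterate_succ_apply', pow_succ', mul_assoc]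
    exact LBd_sub w L hL D hD _ _ _ (by positivity) ih

theorem UBd_iter {A : Type*} (w : A → ℕ → A) (L : ℕ) (hL : 0 < L) (D : ℕ)
    (hD : ∀ a b, a ≠ b → cntN (w a) (w b) L ≤ D) (x y : ℕ → A) (n : ℕ) :
    UBd ((D / L : ℝ) ^ n) (cntN ((subN w L)^[n] x) ((subN w L)^[n] y)) := by
  induction n with
  | zero => exact ⟨0, fun n => by simpa using cntN_le x y n⟩
  | succ n ih =>
    rw [Function.iterate_succ_apply', Function.iterate_succ_apply', pow_succ']
    exact UBd_sub w L hL D hD _ _ _ (by positivity) ih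

/-- Lower bound for shifted sequences of a recognizable fixed point. -/
theorem LBd_of_recog {A : Type*} (u v : ℕ → A) (N : ℕ) (hN : 0 < N)
    (h : ∀ b, ∃ s < N, u (b + s) ≠ v (b + s)) : LBd (1 / N : ℝ) (cntN u v) := by
  refine ⟨1, fun n => ?_⟩
  have h1 : ∀ m, m ≤ cntN u v (N * m) := by
    intro m
    induction m with
    | zero => simp
    | succ m ih =>
      rw [mul_add, mul_one, cntN_add]
      obtain ⟨s, hs, hne⟩ := h (N * m)
      have := cntN_pos (fun k => u (k + N * m)) (fun k => v (k + N * m)) N s hs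
        (by simpa [add_comm] using hne)
      omega
  have h2 := (h1 (n / N)).trans (cntN_mono u v (Nat.mul_div_le n N))
  have h3 : ((n / N : ℕ) : ℝ) ≤ cntN u v n := by exact_mod_cast h2
  have h5 : (n : ℝ) / N ≤ ((n / N : ℕ) : ℝ) + 1 := by
    rw [div_le_iff₀ (by positivity)]
    have := (Nat.lt_mul_div_succ n hN).le
    have h : (n : ℝ) ≤ (N * (n / N + 1) : ℕ) := by exact_mod_cast this
    push_cast at h ⊢
    linarith
  calc (1 / N : ℝ) * n - 1 = (n : ℝ) / N - 1 := by ring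
    _ ≤ _ := by linarith

theorem LBd_shift {A : Type*} (u v : ℕ → A) (a : ℝ) (ha : 0 ≤ a) (i : ℕ) (h : LBd a (cntN u v)) :
    LBd a (cntN (fun k => u (k + i)) (fun k => v (k + i))) := by
  obtain ⟨b, hb⟩ := h
  refine ⟨b + i, fun n => ?_⟩
  have h1 := hb (i + n)
  have h2 := cntN_add u v i n
  have h3 := cntN_le u v i
  have h4 : (cntN u v (i + n) : ℝ) ≤
      i + cntN (fun k => u (k + i)) (fun k => v (k + i)) n := by
    exact_mod_cast (by omega)
  push_cast at h1
  nlinarith [mul_nonneg ha (Nat.cast_nonneg (α := ℝ) i)]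

theorem UBd_shift {A : Type*} (u v : ℕ → A) (a : ℝ) (i : ℕ) (h : UBd a (cntN u v)) :
    UBd a (cntN (fun k => u (k + i)) (fun k => v (k + i))) := by
  obtain ⟨b, hb⟩ := h
  refine ⟨b + a * i, fun n => ?_⟩
  have h1 := hb (i + n)
  have h2 := cntN_add u v i n
  have h4 : (cntN (fun k => u (k + i)) (fun k => v (k + i)) n : ℝ) ≤ cntN u v (i + n) := by
    exact_mod_cast (by omega)
  push_cast at h1
  linarith

/-! ### Upper density -/

theorem dens_bdd (E : Set ℕ) (n : ℕ) :
    0 ≤ (∑ k ∈ Finset.range n, E.indicator (fun _ => (1 : ℝ)) k) / n ∧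
    (∑ k ∈ Finset.range n, E.indicator (fun _ => (1 : ℝ)) k) / n ≤ 1 := by
  constructor
  · refine div_nonneg (Finset.sum_nonneg fun k _ => ?_) (by positivity)
    exact Set.indicator_nonneg (fun _ _ => zero_le_one) _
  · refine div_le_one_of_le₀ ?_ (by positivity)
    calc _ ≤ ∑ k ∈ Finset.range n, (1 : ℝ) := Finset.sum_le_sum fun k _ =>
          Set.indicator_le_self' (fun _ _ => zero_le_one) k
      _ = n := by simp

theorem upperDensity_le (E : Set ℕ) (a b : ℝ)
    (h : ∀ n : ℕ, ∑ k ∈ Finset.range n, E.indicator (fun _ => (1 : ℝ)) k ≤ a * n + b) :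
    upperDensity E ≤ a := by
  unfold upperDensity
  have ht : Tendsto (fun n : ℕ => a + b / n) atTop (𝓝 a) := by
    simpa using tendsto_const_nhds.add (tendsto_const_div_atTop_nhds_zero_nat b)
  rw [← ht.limsup_eq]
  refine limsup_le_limsup ?_ ?_ ?_
  · filter_upwards [eventually_gt_atTop 0] with n hn
    have : (0 : ℝ) < n := by exact_mod_cast hn
    rw [div_le_iff₀ this]
    have e : (a + b / n) * n = a * n + b := by field_simp
    rw [e]; exact h n
  · exact isCoboundedUnder_le_of_le atTop (fun n => (dens_bdd E n).1)
  · exact ht.isBoundedUnder_le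

theorem le_upperDensity (E : Set ℕ) (a b : ℝ)
    (h : ∀ n : ℕ, a * n - b ≤ ∑ k ∈ Finset.range n, E.indicator (fun _ => (1 : ℝ)) k) :
    a ≤ upperDensity E := by
  unfold upperDensity
  have ht : Tendsto (fun n : ℕ => a - b / n) atTop (𝓝 a) := by
    simpa using tendsto_const_nhds.sub (tendsto_const_div_atTop_nhds_zero_nat b)
  rw [← ht.limsup_eq]
  refine limsup_le_limsup ?_ ?_ ?_
  · filter_upwards [eventually_gt_atTop 0] with n hn
    have : (0 : ℝ) < n := by exact_mod_cast hn
    rw [le_div_iff₀ this]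
    have e : (a - b / n) * n = a * n - b := by field_simp
    rw [e]; exact h n
  · exact ht.isCoboundedUnder_le
  · exact isBoundedUnder_of ⟨1, fun n => (dens_bdd E n).2⟩

/-! ### Cantor metric -/

theorem shift_iter {A : Type*} (x : ℤ → A) (k : ℕ) (n : ℤ) : shift^[k] x n = x (n + k) := by
  induction k generalizing n with
  | zero => simp
  | succ k ih =>
    rw [Function.iterate_succ_apply']
    unfold shift at ih ⊢
    rw [ih]; congr 1; push_cast; ring

theorem one_le_cantorDist {A : Type*} (x y : ℤ → A) (h : x 0 ≠ y 0) : 1 ≤ cantorDist x y := by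
  unfold cantorDist
  rw [if_neg (fun e => h (by rw [e]))]
  have : sInf {n : ℕ | ∃ k : ℤ, k.natAbs = n ∧ x k ≠ y k} = 0 :=
    Nat.sInf_eq_zero.2 (Or.inl ⟨0, rfl, h⟩)
  rw [this]; simp

theorem exists_of_le_cantorDist {A : Type*} (x y : ℤ → A) (δ : ℝ) (hδ : 0 < δ) (m : ℕ)
    (hm : (2 : ℝ) ^ (-(m : ℤ)) < δ) (h : δ ≤ cantorDist x y) :
    ∃ r : ℤ, r.natAbs ≤ m ∧ x r ≠ y r := by
  unfold cantorDist at h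
  split_ifs at h with hxy
  · linarith
  · have hne : {n : ℕ | ∃ k : ℤ, k.natAbs = n ∧ x k ≠ y k}.Nonempty := by
      by_contra hcon
      rw [Set.not_nonempty_iff_eq_empty] at hcon
      apply hxy
      funext k
      by_contra hk
      have : k.natAbs ∈ {n : ℕ | ∃ k : ℤ, k.natAbs = n ∧ x k ≠ y k} := ⟨k, rfl, hk⟩
      rw [hcon] at this
      exact this
    obtain ⟨k, hk1, hk2⟩ := Nat.sInf_mem hne
    refine ⟨k, ?_, hk2⟩
    by_contra hcon
    have h1 := hm.trans_le h
    rw [zpow_lt_zpow_iff_right₀ (by norm_num : (1 : ℝ) < 2)] at h1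
    omega

theorem dens_lower {A : Type*} (x y : ℤ → A) (a : ℝ)
    (h : LBd a (cntN (fun k : ℕ => x k) (fun k : ℕ => y k))) :
    a ≤ upperDensity {k : ℕ | 1 ≤ cantorDist (shift^[k] x) (shift^[k] y)} := by
  classical
  obtain ⟨b, hb⟩ := h
  refine le_upperDensity _ a b fun n => (hb n).trans ?_
  unfold cntN
  push_cast
  refine Finset.sum_le_sum fun k _ => ?_
  by_cases hk : x k = y k
  · rw [if_pos hk]; exact Set.indicator_nonneg (fun _ _ => zero_le_one) _
  · rw [if_neg hk, Set.indicator_of_mem]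
    apply one_le_cantorDist
    rw [shift_iter, shift_iter]; simpa using hk

theorem dens_upper {A : Type*} (x y : ℤ → A) (a : ℝ) (δ : ℝ) (hδ : 0 < δ) (m : ℕ)
    (hm : (2 : ℝ) ^ (-(m : ℤ)) < δ)
    (h : UBd a (cntN (fun k : ℕ => x k) (fun k : ℕ => y k))) :
    upperDensity {k : ℕ | δ ≤ cantorDist (shift^[k] x) (shift^[k] y)} ≤ (2 * m + 1 : ℕ) * a := by
  classical
  obtain ⟨b, hb⟩ := h
  set g : ℤ → ℕ := fun n => if x n = y n then 0 else 1 with hg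
  have hg1 : ∀ n, g n ≤ 1 := fun n => by simp only [hg]; split_ifs <;> omega
  -- shifted window sums
  have hwin : ∀ r : ℕ, r < 2 * m + 1 → ∀ n : ℕ,
      ∑ k ∈ Finset.range n, g ((k : ℤ) + r - m) ≤
        cntN (fun k : ℕ => x k) (fun k : ℕ => y k) n + 2 * m := by
    intro r hr n
    have hc : ∀ n : ℕ, cntN (fun k : ℕ => x k) (fun k : ℕ => y k) n =
        ∑ k ∈ Finset.range n, g k := fun n => rfl
    have hle : ∀ (F : ℕ → ℤ) (n : ℕ), ∑ k ∈ Finset.range n, g (F k) ≤ n := fun F n => by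
      calc _ ≤ ∑ k ∈ Finset.range n, 1 := Finset.sum_le_sum (fun k _ => hg1 _)
        _ = n := by simp
    rcases le_total m r with hmr | hmr
    · obtain ⟨d, rfl⟩ := Nat.exists_eq_add_of_le hmr
      have h1 : ∑ k ∈ Finset.range (d + n), g k =
          ∑ k ∈ Finset.range d, g k + ∑ k ∈ Finset.range n, g ((d + k : ℕ) : ℤ) :=
        Finset.sum_range_add (fun k : ℕ => g k) d n
      have h2 : ∑ k ∈ Finset.range (n + d), g k =
          ∑ k ∈ Finset.range n, g k + ∑ k ∈ Finset.range d, g ((n + k : ℕ) : ℤ) :=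
        Finset.sum_range_add (fun k : ℕ => g k) n d
      have h3 : ∑ k ∈ Finset.range n, g ((k : ℤ) + (m + d : ℕ) - m) =
          ∑ k ∈ Finset.range n, g ((d + k : ℕ) : ℤ) :=
        Finset.sum_congr rfl fun k _ => by congr 1; push_cast; ring
      have h4 := hle (fun k => ((n + k : ℕ) : ℤ)) d
      rw [add_comm n d] at h2
      rw [h3, hc]
      omega
    · obtain ⟨d, rfl⟩ := Nat.exists_eq_add_of_le hmr
      have h1 : ∑ k ∈ Finset.range (d + n), g ((k : ℤ) - d) =
          ∑ k ∈ Finset.range d, g ((k : ℤ) - d) +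
            ∑ k ∈ Finset.range n, g (((d + k : ℕ) : ℤ) - d) :=
        Finset.sum_range_add (fun k : ℕ => g ((k : ℤ) - d)) d n
      have h2 : ∑ k ∈ Finset.range (n + d), g ((k : ℤ) - d) =
          ∑ k ∈ Finset.range n, g ((k : ℤ) - d) +
            ∑ k ∈ Finset.range d, g (((n + k : ℕ) : ℤ) - d) :=
        Finset.sum_range_add (fun k : ℕ => g ((k : ℤ) - d)) n d
      have h3 : ∑ k ∈ Finset.range n, g ((k : ℤ) + r - (r + d : ℕ)) =
          ∑ k ∈ Finset.range n, g ((k : ℤ) - d) :=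
        Finset.sum_congr rfl fun k _ => by congr 1; push_cast; ring
      have h5 : ∑ k ∈ Finset.range n, g (((d + k : ℕ) : ℤ) - d) =
          ∑ k ∈ Finset.range n, g k :=
        Finset.sum_congr rfl fun k _ => by congr 1; push_cast; ring
      have h4 := hle (fun k => (k : ℤ) - d) d
      rw [add_comm n d] at h2
      rw [h3, hc]
      omega
  refine upperDensity_le _ _ ((2 * m + 1 : ℕ) * (b + 2 * m)) fun n => ?_
  have h1 : ∑ k ∈ Finset.range n,
      {k : ℕ | δ ≤ cantorDist (shift^[k] x) (shift^[k] y)}.indicator (fun _ => (1 : ℝ)) k ≤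
      ((∑ k ∈ Finset.range n, ∑ r ∈ Finset.range (2 * m + 1), g ((k : ℤ) + r - m) : ℕ) : ℝ) := by
    push_cast
    refine Finset.sum_le_sum fun k _ => ?_
    by_cases hk : k ∈ {k : ℕ | δ ≤ cantorDist (shift^[k] x) (shift^[k] y)}
    · rw [Set.indicator_of_mem hk]
      obtain ⟨r, hr1, hr2⟩ := exists_of_le_cantorDist _ _ δ hδ m hm hk
      rw [shift_iter, shift_iter] at hr2
      have hmem : (r + m).toNat ∈ Finset.range (2 * m + 1) := by
        rw [Finset.mem_range]; omega
      have e : (k : ℤ) + (r + m).toNat - m = r + k := by omega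
      have h2 : (g ((k : ℤ) + (r + m).toNat - m) : ℝ) = 1 := by
        rw [e]; simp [hg, hr2]
      rw [← h2]
      exact Finset.single_le_sum (f := fun r' : ℕ => (g ((k : ℤ) + r' - m) : ℝ))
        (fun _ _ => Nat.cast_nonneg _) hmem
    · rw [Set.indicator_of_notMem hk]
      exact Finset.sum_nonneg fun _ _ => Nat.cast_nonneg _
  have h2 : ∑ k ∈ Finset.range n, ∑ r ∈ Finset.range (2 * m + 1), g ((k : ℤ) + r - m) ≤
      (2 * m + 1) * (cntN (fun k : ℕ => x k) (fun k : ℕ => y k) n + 2 * m) := by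
    rw [Finset.sum_comm]
    calc _ ≤ ∑ r ∈ Finset.range (2 * m + 1),
          (cntN (fun k : ℕ => x k) (fun k : ℕ => y k) n + 2 * m) :=
          Finset.sum_le_sum fun r hr => hwin r (Finset.mem_range.1 hr) n
      _ = _ := by simp
  have h3 : ((∑ k ∈ Finset.range n, ∑ r ∈ Finset.range (2 * m + 1),
      g ((k : ℤ) + r - m) : ℕ) : ℝ) ≤
      ((2 * m + 1 : ℕ) : ℝ) * (cntN (fun k : ℕ => x k) (fun k : ℕ => y k) n + 2 * m) := by
    exact_mod_cast h2
  refine h1.trans (h3.trans ?_)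
  have h4 := hb n
  calc _ ≤ ((2 * m + 1 : ℕ) : ℝ) * ((a * n + b) + 2 * m) :=
        mul_le_mul_of_nonneg_left (by linarith) (Nat.cast_nonneg _)
    _ = _ := by ring

/-! ### Asymptotics -/

theorem asymp_tendsto (lc R lB e : ℝ) :
    Tendsto (fun ν : ℝ => ((lc - Real.log ν) / R + e) * lB / (-Real.log ν)) (𝓝[>] 0)
      (𝓝 (lB / R)) := by
  have hT : Tendsto (fun ν : ℝ => -Real.log ν) (𝓝[>] 0) atTop :=
    tendsto_neg_atBot_atTop.comp Real.tendsto_log_nhdsGT_zero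
  have h1 : Tendsto (fun ν : ℝ => (lc / R + e) * lB / (-Real.log ν) + lB / R) (𝓝[>] 0)
      (𝓝 (0 + lB / R)) := (hT.const_div_atTop _).add tendsto_const_nhds
  rw [zero_add] at h1
  refine h1.congr' ?_
  filter_upwards [hT.eventually (eventually_gt_atTop 0)] with ν hν
  have hne : Real.log ν ≠ 0 := by intro h; rw [h] at hν; simp at hν
  rw [div_add' _ _ _ hν.ne']
  congr 1
  ring

theorem asymp_lower (f : ℝ → ℕ∞) (ρ c : ℝ) (B : ℕ) (hρ0 : 0 < ρ) (hρ1 : ρ < 1) (hc : 0 < c)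
    (hB : 1 ≤ B)
    (h : ∀ (n : ℕ) (ν : ℝ), 0 < ν → ν ≤ c * ρ ^ n → ((B ^ n : ℕ) : ℕ∞) ≤ f ν) :
    ENNReal.ofReal (Real.log B / (-Real.log ρ)) ≤
      Filter.liminf (fun ν : ℝ => logRatio (f ν) ν) (𝓝[>] (0 : ℝ)) := by
  have ht := (ENNReal.continuous_ofReal.tendsto _).comp
    (asymp_tendsto (Real.log c) (-Real.log ρ) (Real.log B) (-1))
  rw [← ht.liminf_eq]
  have hR : 0 < -Real.log ρ := by linarith [Real.log_neg hρ0 hρ1]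
  have hlB : 0 ≤ Real.log B := Real.log_natCast_nonneg B
  refine liminf_le_liminf ?_
  have hsmall : ∀ᶠ ν : ℝ in 𝓝[>] (0 : ℝ), ν < min c 1 :=
    nhdsWithin_le_nhds (eventually_lt_nhds (lt_min hc one_pos))
  filter_upwards [hsmall, self_mem_nhdsWithin] with ν hν1 hν0
  have hν0 : 0 < ν := hν0
  have hνc : ν < c := hν1.trans_le (min_le_left _ _)
  have hν1 : ν < 1 := hν1.trans_le (min_le_right _ _)
  have hlν := Real.log_neg hν0 hν1
  have hlc : Real.log ν < Real.log c := Real.log_lt_log hν0 hνc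
  set t := (Real.log c - Real.log ν) / (-Real.log ρ) with ht
  have ht0 : 0 ≤ t := div_nonneg (by linarith) hR.le
  have hn1 := Nat.floor_le ht0
  have hn2 := Nat.lt_floor_add_one t
  set n := ⌊t⌋₊
  have hn : (n : ℝ) * (-Real.log ρ) ≤ Real.log c - Real.log ν := by
    rwa [ht, le_div_iff₀ hR] at hn1
  have hle : ν ≤ c * ρ ^ n := by
    rw [← Real.log_le_log_iff hν0 (by positivity), Real.log_mul hc.ne' (by positivity),
      Real.log_pow]
    linarith
  have hf := h n ν hν0 hle
  unfold logRatio
  split_ifs with htop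
  · exact le_top
  · apply ENNReal.ofReal_le_ofReal
    apply div_le_div_of_nonneg_right _ (by linarith)
    have hnat : B ^ n ≤ (f ν).toNat := by
      rw [← ENat.natCast_toNat htop] at hf
      exact_mod_cast hf
    have hlog : (n : ℝ) * Real.log B ≤ Real.log ((f ν).toNat : ℝ) := by
      rw [← Real.log_pow]
      apply Real.log_le_log (by positivity)
      exact_mod_cast hnat
    refine le_trans ?_ hlog
    exact mul_le_mul_of_nonneg_right (by linarith) hlB

theorem asymp_upper (f : ℝ → ℕ∞) (ρ c : ℝ) (B : ℕ) (hρ0 : 0 < ρ) (hρ1 : ρ < 1) (hc : 0 < c)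
    (h : ∀ (n : ℕ) (ν : ℝ), c * ρ ^ n < ν → f ν ≤ ((B ^ n : ℕ) : ℕ∞)) :
    Filter.limsup (fun ν : ℝ => logRatio (f ν) ν) (𝓝[>] (0 : ℝ)) ≤
      ENNReal.ofReal (Real.log B / (-Real.log ρ)) := by
  have ht := (ENNReal.continuous_ofReal.tendsto _).comp
    (asymp_tendsto (Real.log c) (-Real.log ρ) (Real.log B) 1)
  rw [← ht.limsup_eq]
  have hR : 0 < -Real.log ρ := by linarith [Real.log_neg hρ0 hρ1]
  have hlB : 0 ≤ Real.log B := Real.log_natCast_nonneg B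
  refine limsup_le_limsup ?_
  have hsmall : ∀ᶠ ν : ℝ in 𝓝[>] (0 : ℝ), ν < min c 1 :=
    nhdsWithin_le_nhds (eventually_lt_nhds (lt_min hc one_pos))
  filter_upwards [hsmall, self_mem_nhdsWithin] with ν hν1 hν0
  have hν0 : 0 < ν := hν0
  have hνc : ν < c := hν1.trans_le (min_le_left _ _)
  have hν1 : ν < 1 := hν1.trans_le (min_le_right _ _)
  have hlν := Real.log_neg hν0 hν1
  have hlc : Real.log ν < Real.log c := Real.log_lt_log hν0 hνc
  set t := (Real.log c - Real.log ν) / (-Real.log ρ) with ht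
  have ht0 : 0 ≤ t := div_nonneg (by linarith) hR.le
  have hn1 := Nat.floor_le ht0
  have hn2 := Nat.lt_floor_add_one t
  set n := ⌊t⌋₊
  have hn : Real.log c - Real.log ν < ((n : ℝ) + 1) * (-Real.log ρ) := by
    rwa [ht, div_lt_iff₀ hR] at hn2
  have hle : c * ρ ^ (n + 1) < ν := by
    rw [← Real.log_lt_log_iff (by positivity) hν0, Real.log_mul hc.ne' (by positivity),
      Real.log_pow]
    push_cast
    linarith
  have hf := h (n + 1) ν hle
  have htop : f ν ≠ ⊤ := ne_top_of_le_ne_top (ENat.natCast_ne_top _) hf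
  unfold logRatio
  rw [if_neg htop]
  apply ENNReal.ofReal_le_ofReal
  apply div_le_div_of_nonneg_right _ (by linarith)
  have hnat : (f ν).toNat ≤ B ^ (n + 1) := by
    rw [← ENat.natCast_toNat htop] at hf
    exact_mod_cast hf
  have hlog : Real.log ((f ν).toNat : ℝ) ≤ ((n : ℝ) + 1) * Real.log B := by
    rcases Nat.eq_zero_or_pos (f ν).toNat with h0 | h0
    · rw [h0]; simp; positivity
    · have : ((n : ℝ) + 1) * Real.log B = Real.log ((B : ℝ) ^ (n + 1)) := by
        rw [Real.log_pow]; push_cast; ring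
      rw [this]
      apply Real.log_le_log (by positivity)
      exact_mod_cast hnat
  refine hlog.trans ?_
  exact mul_le_mul_of_nonneg_right (by linarith) hlB

theorem acLower_le_acUpper {α : Type*} (ρ : α → α → ℝ) (f : α → α) (X : Set α) :
    acLower ρ f X ≤ acUpper ρ f X := by
  unfold acLower acUpper
  exact iSup₂_mono fun δ _ => liminf_le_limsup

/-! ### Two-sided substitutions -/

theorem substApply_continuous {A : Type*} [TopologicalSpace A] [DiscreteTopology A]
    {ℓ : ℕ} (hℓ : 0 < ℓ) (θ : A → Fin ℓ → A) : Continuous (substApply hℓ θ) := by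
  refine continuous_pi fun n => ?_
  unfold substApply
  have h : Continuous fun a : A => θ a ⟨(n % (ℓ : ℤ)).toNat, by
      have h1 : 0 ≤ n % (ℓ : ℤ) := Int.emod_nonneg n (by exact_mod_cast hℓ.ne')
      have h2 : n % (ℓ : ℤ) < (ℓ : ℤ) := Int.emod_lt_of_pos n (by exact_mod_cast hℓ)
      omega⟩ := continuous_of_discreteTopology
  exact h.comp (continuous_apply (n / (ℓ : ℤ)))

theorem substApply_shift {A : Type*} {ℓ : ℕ} (hℓ : 0 < ℓ) (θ : A → Fin ℓ → A) (x : ℤ → A)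
    (q n : ℤ) : substApply hℓ θ (fun k => x (k + q)) n = substApply hℓ θ x (n + ℓ * q) := by
  have hℓ' : (ℓ : ℤ) ≠ 0 := by exact_mod_cast hℓ.ne'
  unfold substApply
  have e1 : (n + ℓ * q) / (ℓ : ℤ) = n / ℓ + q := Int.add_mul_ediv_left _ _ hℓ'
  have e2 : (n + ℓ * q) % (ℓ : ℤ) = n % ℓ := Int.add_mul_emod_self_left _ _ _
  simp only [e1, e2]

theorem substApply_iter_shift {A : Type*} {ℓ : ℕ} (hℓ : 0 < ℓ) (θ : A → Fin ℓ → A) (m : ℕ) :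
    ∀ (x : ℤ → A) (q : ℤ), (substApply hℓ θ)^[m] (fun k => x (k + q)) =
      fun n => (substApply hℓ θ)^[m] x (n + (ℓ : ℤ) ^ m * q) := by
  induction m with
  | zero => intro x q; simp
  | succ m ih =>
    intro x q
    rw [Function.iterate_succ_apply', ih x q]
    funext n
    rw [substApply_shift, Function.iterate_succ_apply', pow_succ']
    congr 1; ring

theorem desub {A : Type*} [Finite A] [TopologicalSpace A] [DiscreteTopology A]
    {ℓ : ℕ} (hℓ : 0 < ℓ) (θ : A → Fin ℓ → A) (x₀ : ℤ → A) (p : ℕ) (hp : 1 ≤ p)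
    (hper : (substApply hℓ θ)^[p] x₀ = x₀) (m : ℕ) (x : ℤ → A) (hx : x ∈ orbitClosure x₀) :
    ∃ j : ℕ, j < ℓ ^ m ∧ ∃ z : ℤ → A, x = fun n => (substApply hℓ θ)^[m] z (n + j) := by
  set K : Set (ℤ → A) := ⋃ j ∈ Finset.range (ℓ ^ m),
    Set.range (fun z : ℤ → A => fun n : ℤ => (substApply hℓ θ)^[m] z (n + (j : ℕ))) with hK
  have hKc : IsClosed K := by
    apply IsCompact.isClosed
    apply Finset.isCompact_biUnion
    intro j _
    apply isCompact_range
    refine continuous_pi fun n => ?_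
    exact (continuous_apply _).comp ((substApply_continuous hℓ θ).iterate m)
  have hsub : orbitClosure x₀ ⊆ K := by
    apply closure_minimal _ hKc
    rintro y ⟨k, rfl⟩
    have hpm : (substApply hℓ θ)^[p * m] x₀ = x₀ := by
      rw [Function.iterate_mul]; exact Function.iterate_fixed hper m
    obtain ⟨r, hr⟩ : ∃ r, p * m = m + r := ⟨p * m - m, by
      have : 1 * m ≤ p * m := Nat.mul_le_mul_right _ hp
      omega⟩
    rw [hr, Function.iterate_add_apply] at hpm
    set x' := (substApply hℓ θ)^[r] x₀
    have hLpos : (0 : ℤ) < (ℓ : ℤ) ^ m := by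
      have : (0 : ℤ) < ℓ := by exact_mod_cast hℓ
      positivity
    simp only [hK, Set.mem_iUnion, Finset.mem_range]
    have h1 := Int.emod_nonneg k hLpos.ne'
    have h2 := Int.emod_lt_of_pos k hLpos
    have h3 : ((k % (ℓ : ℤ) ^ m).toNat : ℤ) = k % (ℓ : ℤ) ^ m := Int.toNat_of_nonneg h1
    refine ⟨(k % (ℓ : ℤ) ^ m).toNat, by zify; rw [h3]; exact h2,
      fun n => x' (n + k / (ℓ : ℤ) ^ m), ?_⟩
    funext n
    beta_reduce
    rw [substApply_iter_shift, hpm, h3]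
    beta_reduce
    congr 1
    have := Int.emod_add_mul_ediv k ((ℓ : ℤ) ^ m)
    linarith
  have := hsub hx
  simp only [hK, Set.mem_iUnion, Finset.mem_range] at this
  obtain ⟨j, hj, z, hz⟩ := this
  exact ⟨j, hj, z, hz.symm⟩

/-- One-sided letters of a substitution. -/
def wordN {A : Type*} {ℓ : ℕ} (hℓ : 0 < ℓ) (θ : A → Fin ℓ → A) (a : A) (i : ℕ) : A :=
  θ a ⟨i % ℓ, Nat.mod_lt _ hℓ⟩

theorem substApply_nat {A : Type*} {ℓ : ℕ} (hℓ : 0 < ℓ) (θ : A → Fin ℓ → A) (x : ℤ → A) :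
    (fun n : ℕ => substApply hℓ θ x n) = subN (wordN hℓ θ) ℓ (fun n : ℕ => x n) := by
  funext n
  unfold substApply subN wordN
  have e : ((n : ℤ) % (ℓ : ℤ)).toNat = n % ℓ % ℓ := by
    rw [Nat.mod_mod]
    have : ((n % ℓ : ℕ) : ℤ) = (n : ℤ) % ℓ := by push_cast; rfl
    rw [← this, Int.toNat_natCast]
  simp only [e]
  congr 2

theorem substApply_iter_nat {A : Type*} {ℓ : ℕ} (hℓ : 0 < ℓ) (θ : A → Fin ℓ → A) (m : ℕ)
    (x : ℤ → A) : (fun n : ℕ => (substApply hℓ θ)^[m] x n) =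
      (subN (wordN hℓ θ) ℓ)^[m] (fun n : ℕ => x n) := by
  induction m with
  | zero => rfl
  | succ m ih =>
    rw [Function.iterate_succ_apply', Function.iterate_succ_apply', ← ih]
    exact substApply_nat hℓ θ _

theorem prim_ext {A : Type*} (w : A → ℕ → A) (Q : ℕ) (hQ : 0 < Q) (m : ℕ)
    (h : ∀ a b, ∃ i < Q ^ m, (subN w Q)^[m] (fun _ => a) i = b) (E : ℕ) (hE : m ≤ E) :
    ∀ a b, ∃ i < Q ^ E, (subN w Q)^[E] (fun _ => a) i = b := by
  induction E, hE using Nat.le_induction with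
  | base => exact h
  | succ E _ ih =>
    intro a b
    obtain ⟨i, hi, hib⟩ := ih (subN w Q (fun _ => a) 0) b
    refine ⟨i, hi.trans_le (Nat.pow_le_pow_right hQ (Nat.le_succ E)), ?_⟩
    rw [Function.iterate_succ_apply]
    have := subN_iter_block w Q hQ E (subN w Q (fun _ => a)) 0 i hi
    rw [mul_zero, zero_add] at this
    rw [this, hib]

theorem coin_ext {A : Type*} (w : A → ℕ → A) (Q : ℕ) (hQ : 0 < Q)
    (h : ∃ j < Q, ∀ a b, w a j = w b j) (P : ℕ) (hP : 1 ≤ P) :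
    ∃ j < Q ^ P, ∀ a b, (subN w Q)^[P] (fun _ => a) j = (subN w Q)^[P] (fun _ => b) j := by
  obtain ⟨j, hj, hjc⟩ := h
  obtain ⟨E, rfl⟩ : ∃ E, P = E + 1 := ⟨P - 1, by omega⟩
  have hpos : 0 < Q ^ E := by positivity
  refine ⟨Q ^ E * j + 0, ?_, fun a b => ?_⟩
  · rw [add_zero, pow_succ]; exact Nat.mul_lt_mul_of_pos_left hj hpos
  · rw [Function.iterate_succ_apply, Function.iterate_succ_apply,
      subN_iter_block w Q hQ E _ j 0 hpos, subN_iter_block w Q hQ E _ j 0 hpos]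
    have : subN w Q (fun _ => a) j = subN w Q (fun _ => b) j := by
      unfold subN; rw [Nat.mod_eq_of_lt hj]; exact hjc a b
    rw [this]

theorem cntN_comm {A : Type*} (x y : ℕ → A) (n : ℕ) : cntN x y n = cntN y x n := by
  classical
  unfold cntN
  refine Finset.sum_congr rfl fun k _ => ?_
  by_cases h : x k = y k
  · rw [if_pos h, if_pos h.symm]
  · rw [if_neg h, if_neg (Ne.symm h)]

theorem cnt_coinc {A : Type*} (L : ℕ) (Θ : A → Fin L → A) (w : A → ℕ → A)
    (h : ∀ a (j : Fin L), Θ a j = w a j) (a b : A) :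
    cntN (w a) (w b) L + coincCount Θ a b = L := by
  classical
  unfold cntN coincCount
  rw [Finset.card_filter, Finset.sum_range, ← Finset.sum_add_distrib]
  calc _ = ∑ j : Fin L, 1 := Finset.sum_congr rfl fun j _ => by
        rw [h, h]; by_cases hab : w a j = w b j <;> simp [hab]
    _ = L := by simp

/-- The separated sets for the lower bound. -/
theorem sep_lower {A : Type*} [Finite A] [Nontrivial A] [TopologicalSpace A]
    (wk : A → ℕ → A) (L : ℕ) (hL : 2 ≤ L) (P : ℕ) (hP : 1 ≤ P)
    (hinj : ∀ a b, (∀ i < L, wk a i = wk b i) → a = b)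
    (hprim : ∀ a b, ∃ i < L ^ P, (subN wk L)^[P] (fun _ => a) i = b)
    (hcoin : ∃ j < L, ∀ a b, wk a j = wk b j)
    (D : ℕ) (hD0 : 0 < D) (hDL : D ≤ L) (hD : ∀ a b, a ≠ b → D ≤ cntN (wk a) (wk b) L)
    (x₀ : ℤ → A) (hfix : (subN wk L)^[P] (fun n : ℕ => x₀ n) = fun n : ℕ => x₀ n) :
    ∃ c : ℝ, 0 < c ∧ ∀ (n : ℕ) (ν : ℝ), 0 < ν → ν ≤ c * (((D : ℝ) / L) ^ P) ^ n →
      (((L ^ P) ^ n : ℕ) : ℕ∞) ≤ sepNum cantorDist shift (orbitClosure x₀) 1 ν := by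
  classical
  have hL0 : 0 < L := by omega
  set u : ℕ → A := fun n : ℕ => x₀ n with hu
  set Q := L ^ P with hQ
  have hQ2 : 2 ≤ Q := hL.trans (Nat.le_self_pow (by omega) L)
  have hsub := subN_iter_eq wk L hL0 P
  obtain ⟨N, hN⟩ := recog (fun a i => (subN wk L)^[P] (fun _ => a) i) Q hQ2
    (fun a b h => subN_iter_inj wk L hL0 hinj P a b h) hprim
    (coin_ext wk L hL0 hcoin P hP) u (by rw [← hsub]; exact hfix)
  have hfixr : ∀ r, (subN wk L)^[P * r] u = u := fun r => by
    rw [Function.iterate_mul]; exact Function.iterate_fixed hfix r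
  have hρ0 : (0 : ℝ) < (D : ℝ) / L := by positivity
  have hρ1 : (D : ℝ) / L ≤ 1 := by
    apply div_le_one_of_le₀ _ (by positivity)
    exact_mod_cast hDL
  have hdiff : ∀ d n, 0 < d → d < Q ^ n →
      ∃ a : ℝ, 1 / ((N + 1 : ℕ) : ℝ) * (((D : ℝ) / L) ^ P) ^ n ≤ a ∧
        LBd a (cntN u (fun k => u (k + d))) := by
    intro d n hd hdn
    obtain ⟨r, t, ht, hdt⟩ := Nat.exists_eq_pow_mul_and_not_dvd hd.ne' Q (by omega)
    have hbase : LBd (1 / ((N + 1 : ℕ) : ℝ)) (cntN u (fun k => u (k + t))) := by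
      apply LBd_of_recog _ _ _ (Nat.succ_pos N)
      intro b
      by_contra hcon
      push Not at hcon
      apply ht
      have h1 := hN b (b + t) (fun s hs => by
        rw [hcon s (by omega)]; congr 1; ring)
      have h2 := (Nat.modEq_iff_dvd' (Nat.le_add_right b t)).1 h1
      rwa [Nat.add_sub_cancel_left] at h2
    have h2 := LBd_iter wk L hL0 D hD _ _ _ (by positivity) hbase (P * r)
    have h3 : (subN wk L)^[P * r] (fun k => u (k + t)) = fun k => u (k + d) := by
      funext k
      rw [subN_iter_shift wk L hL0, hfixr, hdt, hQ, pow_mul]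
    rw [hfixr, h3] at h2
    refine ⟨_, ?_, h2⟩
    rw [mul_comm, ← pow_mul]
    apply mul_le_mul_of_nonneg_right _ (by positivity)
    apply pow_le_pow_of_le_one hρ0.le hρ1
    apply Nat.mul_le_mul_left
    by_contra hcon
    have : Q ^ n ≤ Q ^ r := Nat.pow_le_pow_right (by omega) (by omega)
    have ht0 : 0 < t := Nat.pos_of_ne_zero (by rintro rfl; simp at ht)
    have : Q ^ r ≤ d := by rw [hdt]; exact Nat.le_mul_of_pos_right _ ht0
    omega
  refine ⟨1 / ((N + 1 : ℕ) : ℝ), by positivity, fun n ν hν hle => ?_⟩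
  set g : ℕ → (ℤ → A) := fun i m => x₀ (m + i) with hg
  have hlt : ∀ i j, i < j → j < Q ^ n → ∃ a : ℝ, ν ≤ a ∧
      LBd a (cntN (fun k : ℕ => g i k) (fun k : ℕ => g j k)) := by
    intro i j hij hj
    obtain ⟨a, ha, hLB⟩ := hdiff (j - i) n (by omega) (by omega)
    refine ⟨a, hle.trans ha, ?_⟩
    have h1 := LBd_shift _ _ a (hν.le.trans (hle.trans ha)) i hLB
    have e1 : (fun k => u (k + i)) = (fun k : ℕ => g i k) := by
      funext k; simp [hu, hg]
    have e2 : (fun k => u (k + i + (j - i))) = (fun k : ℕ => g j k) := by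
      funext k
      rw [show k + i + (j - i) = k + j by omega]; simp [hu, hg]
    rw [e1, e2] at h1
    exact h1
  have hne : ∀ i j, i ≠ j → i < Q ^ n → j < Q ^ n → ∃ a : ℝ, ν ≤ a ∧
      LBd a (cntN (fun k : ℕ => g i k) (fun k : ℕ => g j k)) := by
    intro i j hij hi hj
    rcases lt_or_gt_of_ne hij with h | h
    · exact hlt i j h hj
    · obtain ⟨a, ha, b, hb⟩ := hlt j i h hi
      exact ⟨a, ha, b, fun n => by rw [cntN_comm]; exact hb n⟩
  have hginj : Set.InjOn g (Finset.range (Q ^ n) : Set ℕ) := by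
    intro i hi j hj hgij
    by_contra hij
    obtain ⟨a, ha, b, hb⟩ := hne i j hij (by simpa using hi) (by simpa using hj)
    rw [hgij] at hb
    obtain ⟨m, hm⟩ := exists_nat_gt (b / a)
    have hm' := hb m
    rw [cntN_self] at hm'
    rw [div_lt_iff₀ (hν.trans_le ha)] at hm
    push_cast at hm'
    linarith
  have hsep : IsSepSet cantorDist shift (orbitClosure x₀) 1 ν
      (g '' (Finset.range (Q ^ n) : Set ℕ)) := by
    constructor
    · rintro _ ⟨i, _, rfl⟩
      exact subset_closure ⟨i, rfl⟩
    · rintro _ ⟨i, hi, rfl⟩ _ ⟨j, hj, rfl⟩ hij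
      obtain ⟨a, ha, hLB⟩ := hne i j (fun h => hij (by rw [h])) (by simpa using hi)
        (by simpa using hj)
      exact ha.trans (dens_lower _ _ a hLB)
  unfold sepNum
  refine le_trans ?_ (le_iSup₂ (f := fun (S : Set (ℤ → A))
    (_ : IsSepSet cantorDist shift (orbitClosure x₀) 1 ν S) => S.encard) _ hsep)
  rw [hginj.encard_image, Set.encard_coe_eq_coe_finsetCard, Finset.card_range]

theorem sep_upper {A : Type*} [Finite A] [TopologicalSpace A] [DiscreteTopology A]
    {ℓ : ℕ} (hℓ : 0 < ℓ) (θ : A → Fin ℓ → A) (k : ℕ) (wk : A → ℕ → A)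
    (hwk : (subN (wordN hℓ θ) ℓ)^[k] = subN wk (ℓ ^ k))
    (D : ℕ) (hD : ∀ a b, a ≠ b → cntN (wk a) (wk b) (ℓ ^ k) ≤ D)
    (x₀ : ℤ → A) (p : ℕ) (hp : 1 ≤ p) (hper : (substApply hℓ θ)^[p] x₀ = x₀)
    (δ : ℝ) (hδ : 0 < δ) (m : ℕ) (hm : (2 : ℝ) ^ (-(m : ℤ)) < δ) (n : ℕ) (ν : ℝ)
    (hν : ((2 * m + 1 : ℕ) : ℝ) * ((D : ℝ) / (ℓ ^ k : ℕ)) ^ n < ν) :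
    sepNum cantorDist shift (orbitClosure x₀) δ ν ≤ (((ℓ ^ k) ^ n : ℕ) : ℕ∞) := by
  classical
  unfold sepNum
  refine iSup₂_le fun S hS => ?_
  have hde : ∀ x : ℤ → A, ∃ j : ℕ, x ∈ S → j < (ℓ ^ k) ^ n ∧
      ∃ z : ℤ → A, x = fun i => (substApply hℓ θ)^[k * n] z (i + j) := by
    intro x
    by_cases hx : x ∈ S
    · obtain ⟨j, hj, hz⟩ := desub hℓ θ x₀ p hp hper (k * n) x (hS.1 hx)
      exact ⟨j, fun _ => ⟨by rwa [← pow_mul], hz⟩⟩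
    · exact ⟨0, fun h => absurd h hx⟩
  choose J hJ using hde
  have hmaps : Set.MapsTo J S (Finset.range ((ℓ ^ k) ^ n) : Set ℕ) := fun x hx => by
    simpa using (hJ x hx).1
  have hinj : Set.InjOn J S := by
    intro x hx y hy hxy
    by_contra hne
    obtain ⟨_, zx, hzx⟩ := hJ x hx
    obtain ⟨_, zy, hzy⟩ := hJ y hy
    rw [← hxy] at hzy
    have hconv : ∀ (x z : ℤ → A) (j : ℕ), (x = fun i => (substApply hℓ θ)^[k * n] z (i + j)) →
        (fun i : ℕ => x i) = fun i : ℕ => (subN wk (ℓ ^ k))^[n] (fun i : ℕ => z i) (i + j) := by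
      intro x z j h
      funext i
      have h1 := congrFun (substApply_iter_nat hℓ θ (k * n) z) (i + j)
      rw [Function.iterate_mul (subN (wordN hℓ θ) ℓ) k n, hwk] at h1
      rw [← h1, h]
      push_cast
      rfl
    have h1 := UBd_shift _ _ _ (J x) (UBd_iter wk (ℓ ^ k) (by positivity) D hD
      (fun i : ℕ => zx i) (fun i : ℕ => zy i) n)
    rw [← hconv x zx _ hzx, ← hconv y zy _ hzy] at h1
    have h2 := dens_upper x y _ δ hδ m hm h1
    have h3 := hS.2 x hx y hy hne
    linarith
  calc S.encard ≤ (Finset.range ((ℓ ^ k) ^ n) : Set ℕ).encard :=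
        Set.encard_le_encard_of_injOn hmaps hinj
    _ = _ := by rw [Set.encard_coe_eq_coe_finsetCard, Finset.card_range]

/-- If `θ` is a one-to-one primitive substitution of constant length
`ℓ` with a coincidence of order `k` and `X_θ` is infinite, then, with `Θ = θ^k` (of
constant length `ℓ^k`),
`1 ≤ log|Θ|/(log|Θ| - log(|Θ| - C(Θ))) ≤ ac_ ≤ ac¯ ≤ log|Θ|/(log|Θ| - log(|Θ| - c(Θ))) < ∞`. -/
theorem substitution_one_to_one_coincidence_ac_bounds
    {A : Type} [Fintype A] [TopologicalSpace A] [DiscreteTopology A]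
    {ℓ : ℕ} (hℓ : 0 < ℓ) (θ : A → Fin ℓ → A) (hprim : IsPrimitive hℓ θ)
    (hinj : Function.Injective θ)
    (k : ℕ) (hk : 1 ≤ k)
    (hcoin : ∃ j : ℤ, 0 ≤ j ∧ j < (ℓ : ℤ) ^ k ∧ ∀ a b : A,
      (substApply hℓ θ)^[k] (fun _ => a) j = (substApply hℓ θ)^[k] (fun _ => b) j)
    (x₀ : ℤ → A) (p : ℕ) (hp : 1 ≤ p) (hper : (substApply hℓ θ)^[p] x₀ = x₀)
    (hinf : (orbitClosure x₀).Infinite)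
    (Θ : A → Fin (ℓ ^ k) → A)
    (hΘ : ∀ (a : A) (j : Fin (ℓ ^ k)), Θ a j = (substApply hℓ θ)^[k] (fun _ => a) ((j : ℕ) : ℤ)) :
    1 ≤ ENNReal.ofReal
        (Real.log (ℓ ^ k : ℕ) / (Real.log (ℓ ^ k : ℕ) - Real.log ((ℓ ^ k : ℝ) - cMax Θ))) ∧
    ENNReal.ofReal
        (Real.log (ℓ ^ k : ℕ) / (Real.log (ℓ ^ k : ℕ) - Real.log ((ℓ ^ k : ℝ) - cMax Θ))) ≤
      acLower cantorDist shift (orbitClosure x₀) ∧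
    acLower cantorDist shift (orbitClosure x₀) ≤ acUpper cantorDist shift (orbitClosure x₀) ∧
    acUpper cantorDist shift (orbitClosure x₀) ≤
      ENNReal.ofReal
        (Real.log (ℓ ^ k : ℕ) / (Real.log (ℓ ^ k : ℕ) - Real.log ((ℓ ^ k : ℝ) - cMin Θ))) ∧
    ENNReal.ofReal
        (Real.log (ℓ ^ k : ℕ) / (Real.log (ℓ ^ k : ℕ) - Real.log ((ℓ ^ k : ℝ) - cMin Θ))) < ⊤ := by
  classical
  have hnt : Nontrivial A := by
    by_contra hcon
    rw [not_nontrivial_iff_subsingleton] at hcon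
    exact hinf (Set.toFinite _)
  obtain ⟨L, hLdef⟩ : ∃ L : ℕ, L = ℓ ^ k := ⟨_, rfl⟩
  have hL0 : 0 < L := by rw [hLdef]; positivity
  revert Θ
  rw [← hLdef]
  intro Θ hΘ
  set wk : A → ℕ → A := fun a i => (subN (wordN hℓ θ) ℓ)^[k] (fun _ => a) i with hwkdef
  have hwk : (subN (wordN hℓ θ) ℓ)^[k] = subN wk L := by
    rw [hLdef]; exact subN_iter_eq _ ℓ hℓ k
  have hΘw : ∀ a (j : Fin L), Θ a j = wk a j := fun a j => by
    rw [hΘ]; exact congrFun (substApply_iter_nat hℓ θ k (fun _ => a)) j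
  have hinj0 : ∀ a b, (∀ i < ℓ, wordN hℓ θ a i = wordN hℓ θ b i) → a = b := by
    intro a b h
    apply hinj
    funext i
    have := h i i.2
    unfold wordN at this
    simpa [Nat.mod_eq_of_lt i.2] using this
  have hinjk : ∀ a b, (∀ i < L, wk a i = wk b i) → a = b := fun a b h =>
    subN_iter_inj _ ℓ hℓ hinj0 k a b (by rw [← hLdef]; exact h)
  have hcoink : ∃ j < L, ∀ a b, wk a j = wk b j := by
    obtain ⟨j, hj0, hj1, hj⟩ := hcoin
    lift j to ℕ using hj0
    refine ⟨j, by rw [hLdef]; exact_mod_cast hj1, fun a b => ?_⟩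
    have h1 := congrFun (substApply_iter_nat hℓ θ k (fun _ => a)) j
    have h2 := congrFun (substApply_iter_nat hℓ θ k (fun _ => b)) j
    exact h1.symm.trans ((hj a b).trans h2)
  have hcc := cnt_coinc L Θ wk hΘw
  -- the extremal coincidence numbers
  set T : Set ℕ := {n : ℕ | ∃ a b : A, a ≠ b ∧ coincCount Θ a b = n} with hT
  have hTne : T.Nonempty := by
    obtain ⟨a, b, hab⟩ := exists_pair_ne A
    exact ⟨_, a, b, hab, rfl⟩
  have hTbdd : BddAbove T := ⟨L, by
    rintro n ⟨a, b, _, rfl⟩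
    have := hcc a b
    omega⟩
  have hle_C : ∀ a b, a ≠ b → coincCount Θ a b ≤ cMax Θ := fun a b hab =>
    le_csSup hTbdd ⟨a, b, hab, rfl⟩
  have hc_le : ∀ a b, a ≠ b → cMin Θ ≤ coincCount Θ a b := fun a b hab =>
    Nat.sInf_le ⟨a, b, hab, rfl⟩
  have hCL : cMax Θ < L := by
    obtain ⟨a, b, hab, h⟩ := Nat.sSup_mem hTne hTbdd
    have h' : coincCount Θ a b = cMax Θ := h
    obtain ⟨i, hi, hne⟩ : ∃ i < L, wk a i ≠ wk b i := by
      by_contra hcon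
      push Not at hcon
      exact hab (hinjk a b hcon)
    have h1 := cntN_pos (wk a) (wk b) L i hi hne
    have := hcc a b
    omega
  have hc1 : 1 ≤ cMin Θ := by
    obtain ⟨a, b, hab, h⟩ := Nat.sInf_mem hTne
    have h' : coincCount Θ a b = cMin Θ := h
    rw [← h']
    obtain ⟨j, hj, hjc⟩ := hcoink
    unfold coincCount
    apply Finset.card_pos.2
    refine ⟨⟨j, hj⟩, ?_⟩
    rw [Finset.mem_filter]
    exact ⟨Finset.mem_univ _, by rw [hΘw, hΘw]; exact hjc a b⟩
  have hcC : cMin Θ ≤ cMax Θ := by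
    obtain ⟨a, b, hab⟩ := exists_pair_ne A
    exact (hc_le a b hab).trans (hle_C a b hab)
  have hL2 : 2 ≤ L := by omega
  have hLcast : ((ℓ : ℝ) ^ k) = (L : ℝ) := by rw [hLdef]; push_cast; ring
  have hLpos : (0 : ℝ) < L := by exact_mod_cast hL0
  have hsubC : (L : ℝ) - cMax Θ = ((L - cMax Θ : ℕ) : ℝ) := by
    rw [Nat.cast_sub hCL.le]
  have hsubc : (L : ℝ) - cMin Θ = ((L - cMin Θ : ℕ) : ℝ) := by
    rw [Nat.cast_sub (by omega)]
  rw [hLcast, hsubC, hsubc]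
  obtain ⟨D1, hD1⟩ : ∃ D1, D1 = L - cMax Θ := ⟨_, rfl⟩
  obtain ⟨D2, hD2⟩ : ∃ D2, D2 = L - cMin Θ := ⟨_, rfl⟩
  rw [← hD1, ← hD2]
  have hlogdiv : ∀ D : ℕ, 0 < D → Real.log L - Real.log D = - Real.log ((D : ℝ) / L) := by
    intro D hD
    rw [Real.log_div (by positivity) (by positivity)]; ring
  have hρ1 : ∀ D : ℕ, D < L → (D : ℝ) / L < 1 := fun D hD => by
    rw [div_lt_one hLpos]; exact_mod_cast hD
  refine ⟨?_, ?_, acLower_le_acUpper _ _ _, ?_, ENNReal.ofReal_lt_top⟩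
  · rw [ENNReal.one_le_ofReal]
    have h1 : 0 ≤ Real.log D1 := Real.log_natCast_nonneg D1
    have h2 : Real.log D1 < Real.log L :=
      Real.log_lt_log (by exact_mod_cast (by omega)) (by exact_mod_cast (by omega))
    rw [one_le_div (by linarith)]
    linarith
  · obtain ⟨m0, hm0, hpr⟩ := hprim
    have hpr0 : ∀ a b, ∃ i < ℓ ^ m0, (subN (wordN hℓ θ) ℓ)^[m0] (fun _ => a) i = b := by
      intro a b
      obtain ⟨j, hj0, hj1, hj⟩ := hpr a b
      lift j to ℕ using hj0
      refine ⟨j, by exact_mod_cast hj1, ?_⟩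
      rw [← hj]
      exact (congrFun (substApply_iter_nat hℓ θ m0 (fun _ => a)) j).symm
    set P := p * m0 with hP
    have hP1 : 1 ≤ P := Nat.mul_pos hp hm0
    have hkP : m0 ≤ k * P := by
      calc m0 = 1 * (1 * m0) := by ring
        _ ≤ k * (p * m0) := Nat.mul_le_mul hk (Nat.mul_le_mul_right _ hp)
    have hprP : ∀ a b, ∃ i < L ^ P, (subN wk L)^[P] (fun _ => a) i = b := by
      have := prim_ext _ ℓ hℓ m0 hpr0 (k * P) hkP
      rwa [Function.iterate_mul, hwk, pow_mul, ← hLdef] at this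
    have hfix : (subN wk L)^[P] (fun n : ℕ => x₀ n) = fun n : ℕ => x₀ n := by
      rw [← hwk, ← Function.iterate_mul, ← substApply_iter_nat]
      have : (substApply hℓ θ)^[k * P] x₀ = x₀ := by
        rw [hP, show k * (p * m0) = p * (k * m0) by ring, Function.iterate_mul]
        exact Function.iterate_fixed hper _
      rw [this]
    have hD10 : 0 < D1 := by omega
    obtain ⟨c, hc, hsep⟩ := sep_lower wk L hL2 P hP1 hinjk hprP hcoink D1 hD10 (by omega)
      (fun a b hab => by have := hcc a b; have := hle_C a b hab; omega) x₀ hfix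
    have hr0 : (0 : ℝ) < (D1 : ℝ) / L := by positivity
    have hA := asymp_lower (fun ν => sepNum cantorDist shift (orbitClosure x₀) 1 ν)
      (((D1 : ℝ) / L) ^ P) c (L ^ P) (by positivity)
      (pow_lt_one₀ hr0.le (hρ1 D1 (by omega)) (by omega)) hc (Nat.one_le_pow _ _ hL0) hsep
    have e : Real.log ((L ^ P : ℕ) : ℝ) / -Real.log (((D1 : ℝ) / L) ^ P) =
        Real.log L / (Real.log L - Real.log D1) := by
      rw [hlogdiv D1 hD10]
      push_cast
      rw [Real.log_pow, Real.log_pow, ← mul_neg]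
      exact mul_div_mul_left _ _ (by exact_mod_cast (by omega))
    rw [e] at hA
    refine hA.trans ?_
    unfold acLower
    exact le_iSup₂ (f := fun (δ : ℝ) (_ : 0 < δ) => Filter.liminf
      (fun ν : ℝ => logRatio (sepNum cantorDist shift (orbitClosure x₀) δ ν) ν)
      (𝓝[>] (0 : ℝ))) (1 : ℝ) one_pos
  · unfold acUpper
    refine iSup₂_le fun δ hδ => ?_
    obtain ⟨m, hm⟩ := exists_pow_lt_of_lt_one hδ (by norm_num : (1 / 2 : ℝ) < 1)
    have hm' : (2 : ℝ) ^ (-(m : ℤ)) < δ := by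
      rw [zpow_neg, zpow_natCast]
      simpa using hm
    have hD20 : 0 < D2 := by omega
    rw [hlogdiv D2 hD20]
    refine asymp_upper _ ((D2 : ℝ) / L) ((2 * m + 1 : ℕ) : ℝ) L (by positivity)
      (hρ1 D2 (by omega)) (by positivity) fun n ν hν => ?_
    have hup := sep_upper hℓ θ k wk (by rw [hwk, hLdef]) D2
      (fun a b hab => by
        rw [← hLdef]; have := hcc a b; have := hc_le a b hab; omega)
      x₀ p hp hper δ hδ m hm' n ν
    rw [← hLdef] at hup
    exact hup hν
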